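/- arXiv:2409.05185 — 3 statements merged into one kernel-verified Lean document; each statement's English description precedes it below -/
import Mathlib

section
/- Let ν and μ be probability measures on a measurable space Ω such that μ = ν.withDensity z for a nonnegative measurable function z. Let λ ≥ 0 and ε ∈ (0,1) satisfy ν({z > λ}) = ε. Then for every measurable set A ⊆ Ω with ν(A) ≤ ε, one has μ(Aᶜ) ≥ μ({z ≤ λ}). -/
/-! The regions `A` and `{z > λ}` are compared off their common part. With `B = {z ≤ λ}`, the
size constraint `ν A ≤ ν Bᶜ` gives `ν (A ∩ B) ≤ ν (Bᶜ \ A)` after cancelling the finite mass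
`ν (A \ B)`. The density is at most `λ` on `A ∩ B` and at least `λ` on `Bᶜ \ A`, so
`μ (A ∩ B) ≤ λ ν (A ∩ B) ≤ λ ν (Bᶜ \ A) ≤ μ (Bᶜ \ A)`; adding `μ (B \ A)` to both ends yields
`μ B ≤ μ Aᶜ`. -/

open MeasureTheory

/-- Generalized Neyman–Pearson lemma: if `μ = ν.withDensity z`, `λ ≥ 0`, `ε ∈ (0,1)` and
`ν({z > λ}) = ε`, then every measurable `A` with `ν(A) ≤ ε` satisfies
`μ(Aᶜ) ≥ μ({z ≤ λ})`. -/
theorem neyman_pearson {Ω : Type*} [MeasurableSpace Ω]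
    (ν μ : Measure Ω) [IsProbabilityMeasure ν] [IsProbabilityMeasure μ]
    (z : Ω → ℝ) (hz : Measurable z) (hz0 : ∀ ω, 0 ≤ z ω)
    (hμ : μ = ν.withDensity (fun ω => ENNReal.ofReal (z ω)))
    (lam : ℝ) (hlam : 0 ≤ lam) (ε : ℝ) (hε : ε ∈ Set.Ioo (0 : ℝ) 1)
    (hlevel : ν {ω | lam < z ω} = ENNReal.ofReal ε) :
    ∀ A : Set Ω, MeasurableSet A → ν A ≤ ENNReal.ofReal ε →
      μ {ω | z ω ≤ lam} ≤ μ Aᶜ := by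
  intro A hA hAε
  set B : Set Ω := {ω | z ω ≤ lam} with hBdef
  have hB : MeasurableSet B := measurableSet_le hz measurable_const
  have hBc : ν Bᶜ = ENNReal.ofReal ε := by
    rw [← hlevel]
    congr 1
    ext ω
    simp [hBdef]
  have hν : ν (A ∩ B) ≤ ν (Bᶜ \ A) := by
    have h1 : ν (A ∩ B) + ν (A \ B) = ν A := measure_inter_add_sdiff A hB
    have h2 : ν (Bᶜ ∩ A) + ν (Bᶜ \ A) = ν Bᶜ := measure_inter_add_sdiff Bᶜ hA
    have h3 : Bᶜ ∩ A = A \ B := by rw [Set.inter_comm, Set.sdiff_eq]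
    rw [h3] at h2
    have h4 : ν (A \ B) + ν (A ∩ B) ≤ ν (A \ B) + ν (Bᶜ \ A) := by
      rw [add_comm, h1, h2, hBc]
      exact hAε
    exact (ENNReal.add_le_add_iff_left (measure_ne_top ν _)).1 h4
  have hle : μ (A ∩ B) ≤ ENNReal.ofReal lam * ν (A ∩ B) := by
    rw [hμ, withDensity_apply _ (hA.inter hB), ← setLIntegral_const]
    exact setLIntegral_mono measurable_const fun ω hω => ENNReal.ofReal_le_ofReal hω.2
  have hge : ENNReal.ofReal lam * ν (Bᶜ \ A) ≤ μ (Bᶜ \ A) := by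
    rw [hμ, withDensity_apply _ (hB.compl.diff hA), ← setLIntegral_const]
    exact setLIntegral_mono hz.ennreal_ofReal fun ω hω =>
      ENNReal.ofReal_le_ofReal (le_of_not_ge hω.1)
  calc μ B = μ (A ∩ B) + μ (B \ A) := by
        rw [Set.inter_comm, measure_inter_add_sdiff B hA]
    _ ≤ μ (Bᶜ \ A) + μ (B \ A) := by
        refine add_le_add_left ?_ _
        exact hle.trans ((mul_le_mul_right hν _).trans hge)
    _ = μ Aᶜ := by
        rw [← measure_inter_add_sdiff Aᶜ hB, add_comm]
        congr 2 <;> ext ω <;> simp [and_comm]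
end

section
/- Let ν and μ be probability measures on a measurable space Ω such that μ = ν.withDensity z for a nonnegative measurable function z. Let λ > 0 and ε ∈ (0,1) satisfy ν({z > λ}) = ε and ν({z = λ}) = 0. If a measurable set A ⊆ Ω satisfies ν(A) ≤ ε and μ(Aᶜ) = μ({z ≤ λ}), then ν(A Δ {z > λ}) = 0, i.e., A coincides with the likelihood-ratio rejection region up to a ν-null set. -/
open MeasureTheory

/-!
Write `R = {z > λ}`. Equality of the type II errors gives `μ (A \ R) = μ (R \ A)`, and the level
constraint gives `ν (A \ R) ≤ ν (R \ A)`. Since `z ≤ λ` off `R`,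
`∫ z over R \ A = μ (R \ A) = μ (A \ R) ≤ λ ν (A \ R) ≤ λ ν (R \ A)`,
whereas `z > λ` on `R` makes the left side strictly larger than the right side unless
`ν (R \ A) = 0`. Hence `R \ A` is `ν`-null, and then so is `A \ R`.
-/

/-- Uniqueness in the Neyman–Pearson lemma: if `μ = ν.withDensity z`, `λ > 0`, `ε ∈ (0,1)`,
`ν({z > λ}) = ε` and `ν({z = λ}) = 0`, then any measurable `A` with `ν(A) ≤ ε` achieving
the minimal type II error `μ(Aᶜ) = μ({z ≤ λ})` satisfies `ν(A Δ {z > λ}) = 0`. -/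
theorem neyman_pearson_unique {Ω : Type*} [MeasurableSpace Ω]
    (ν μ : Measure Ω) [IsProbabilityMeasure ν] [IsProbabilityMeasure μ]
    (z : Ω → ℝ) (hz : Measurable z) (hz0 : ∀ ω, 0 ≤ z ω)
    (hμ : μ = ν.withDensity (fun ω => ENNReal.ofReal (z ω)))
    (lam : ℝ) (hlam : 0 < lam) (ε : ℝ) (hε : ε ∈ Set.Ioo (0 : ℝ) 1)
    (hlevel : ν {ω | lam < z ω} = ENNReal.ofReal ε)
    (hboundary : ν {ω | z ω = lam} = 0)
    (A : Set Ω) (hA : MeasurableSet A) (hAlevel : ν A ≤ ENNReal.ofReal ε)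
    (hAopt : μ Aᶜ = μ {ω | z ω ≤ lam}) :
    ν (symmDiff A {ω | lam < z ω}) = 0 := by
  set R : Set Ω := {ω | lam < z ω} with hRdef
  have hR : MeasurableSet R := measurableSet_lt measurable_const hz
  have hRc : {ω | z ω ≤ lam} = Rᶜ := by ext ω; simp [hRdef]
  have hμAR : μ A = μ R := by
    rw [hRc] at hAopt
    rw [← compl_compl A, ← compl_compl R, prob_compl_eq_one_sub hA.compl,
      prob_compl_eq_one_sub hR.compl, hAopt]
  have hμdiff : μ (A \ R) = μ (R \ A) := by
    have h1 := measure_inter_add_sdiff (μ := μ) A hR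
    have h2 := measure_inter_add_sdiff (μ := μ) R hA
    rw [Set.inter_comm] at h2
    exact (ENNReal.add_right_inj (measure_ne_top μ (A ∩ R))).1 (h1.trans (hμAR.trans h2.symm))
  have hνdiff : ν (A \ R) ≤ ν (R \ A) := by
    have h1 := measure_inter_add_sdiff (μ := ν) A hR
    have h2 := measure_inter_add_sdiff (μ := ν) R hA
    rw [Set.inter_comm] at h2
    refine (ENNReal.add_le_add_iff_left (measure_ne_top ν (A ∩ R))).1 ?_
    rw [h1, h2, hlevel]
    exact hAlevel
  have hupper : μ (A \ R) ≤ ENNReal.ofReal lam * ν (A \ R) := by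
    rw [hμ, withDensity_apply _ (hA.diff hR), ← setLIntegral_const]
    refine setLIntegral_mono measurable_const fun ω hω => ENNReal.ofReal_le_ofReal ?_
    exact not_lt.1 hω.2
  have hRA : ν (R \ A) = 0 := by
    by_contra hne
    have hstrict : ENNReal.ofReal lam * ν (R \ A) < μ (R \ A) := by
      rw [hμ, withDensity_apply _ (hR.diff hA), ← setLIntegral_const]
      refine setLIntegral_strict_mono (hR.diff hA) hne hz.ennreal_ofReal ?_ ?_
      · rw [setLIntegral_const]
        exact ENNReal.mul_ne_top ENNReal.ofReal_ne_top (measure_ne_top ν _)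
      · exact Filter.Eventually.of_forall fun ω hω =>
          (ENNReal.ofReal_lt_ofReal_iff (hlam.trans hω.1)).2 hω.1
    exact absurd (hstrict.trans_le (hμdiff.symm.le.trans (hupper.trans (by gcongr))))
      (lt_irrefl _)
  have hAR : ν (A \ R) = 0 := le_antisymm (hνdiff.trans hRA.le) zero_le
  rw [Set.symmDiff_def]
  exact measure_union_null hAR hRA
end

section
/- Let T > 0, m₀ > 0, ε ∈ (0,1). Then sup over m ≥ m₀ of [inf over measurable A ⊆ ℝ with N(0,T)(A) ≤ ε of N(m,T)(ℝ \ A)] equals Φ(Φ⁻¹(1−ε) − m₀/√T), and both the supremum and the infimum are attained: the supremum at m = m₀, and the inner infimum at A = {y : y > √T·Φ⁻¹(1−ε)}. -/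
/-! The likelihood ratio of `N(m,T)` against `N(0,T)` is `y ↦ exp((2my − m²)/(2T))`, which is
increasing for `m > 0`; hence by the Neyman–Pearson argument (`gaussian_neymanPearson`) no set of
`N(0,T)`-mass at most that of a half-line `(t, ∞)` has larger `N(m,T)`-mass than it. With
`t = √T·Φ⁻¹(1−ε)` the half-line has `N(0,T)`-mass exactly `ε`, because `Φ` is continuous and so
attains `1 − ε`. This gives the inner infimum `Φ(Φ⁻¹(1−ε) − m/√T)` for every `m > 0`
(`isLeast_typeII`), and this value decreases in `m` since `Φ` is monotone. -/

open MeasureTheory ProbabilityTheory Real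

/-- The standard normal cumulative distribution function
`Φ(x) = (1/√(2π)) ∫_{−∞}^x exp(−t²/2) dt`. -/
noncomputable def Phi (x : ℝ) : ℝ :=
  (Real.sqrt (2 * Real.pi))⁻¹ * ∫ t in Set.Iic x, Real.exp (-(t ^ 2) / 2)

/-- The inverse of the standard normal CDF on `(0,1)`. -/
noncomputable def PhiInv : ℝ → ℝ := Function.invFun Phi

/-- Minimal type II error of a level-`ε` test of `N(0,T)` against `N(m,T)`. -/
noncomputable def minTypeII (T m ε : ℝ) : ℝ :=
  sInf {b : ℝ | ∃ A : Set ℝ, MeasurableSet A ∧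
    (gaussianReal 0 (Real.toNNReal T) A).toReal ≤ ε ∧
    b = (gaussianReal m (Real.toNNReal T) Aᶜ).toReal}

lemma Phi_eq_gaussianReal (x : ℝ) : Phi x = (gaussianReal 0 1).real (Set.Iic x) := by
  rw [measureReal_def, gaussianReal_apply_eq_integral _ one_ne_zero, ENNReal.toReal_ofReal
    (integral_nonneg fun y => gaussianPDFReal_nonneg _ _ y), Phi, ← integral_const_mul]
  simp [gaussianPDFReal]

lemma Phi_mono : Monotone Phi := by
  intro x y h
  rw [Phi_eq_gaussianReal, Phi_eq_gaussianReal]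
  exact measureReal_mono (Set.Iic_subset_Iic.2 h)

lemma Phi_continuous : Continuous Phi := by
  have hint : Integrable (fun t : ℝ => Real.exp (-(t ^ 2) / 2)) := by
    convert integrable_exp_neg_mul_sq (b := 1 / 2) (by norm_num) using 3
    ring
  have h : Phi = fun x => (Real.sqrt (2 * Real.pi))⁻¹ *
      ((∫ t in Set.Iic 0, Real.exp (-(t ^ 2) / 2)) + ∫ t in (0 : ℝ)..x, Real.exp (-(t ^ 2) / 2)) := by
    funext x
    rw [← intervalIntegral.integral_Iic_sub_Iic hint.integrableOn hint.integrableOn, Phi]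
    ring
  rw [h]
  exact continuous_const.mul (continuous_const.add
    (intervalIntegral.continuous_primitive (fun a b => hint.intervalIntegrable) 0))

lemma Phi_PhiInv {p : ℝ} (hp : p ∈ Set.Ioo (0 : ℝ) 1) : Phi (PhiInv p) = p := by
  have hcdf : Phi = cdf (gaussianReal 0 1) := by
    funext x
    rw [Phi_eq_gaussianReal, cdf_eq_real]
  have h0 : Filter.Tendsto Phi Filter.atBot (nhds 0) := hcdf ▸ tendsto_cdf_atBot _
  have h1 : Filter.Tendsto Phi Filter.atTop (nhds 1) := hcdf ▸ tendsto_cdf_atTop _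
  refine Function.invFun_eq (mem_range_of_exists_le_of_exists_ge Phi_continuous ?_ ?_)
  · exact ((h0.eventually_lt_const hp.1).exists).imp fun _ h => h.le
  · exact ((h1.eventually_const_lt hp.2).exists).imp fun _ h => h.le

lemma gaussianReal_Iic {T : ℝ} (hT : 0 < T) (m x : ℝ) :
    (gaussianReal m (Real.toNNReal T)).real (Set.Iic x) = Phi ((x - m) / Real.sqrt T) := by
  have hs : 0 < Real.sqrt T := Real.sqrt_pos.2 hT
  have h : gaussianReal m (Real.toNNReal T)
      = ((gaussianReal 0 1).map (Real.sqrt T * ·)).map (· + m) := by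
    rw [gaussianReal_map_const_mul, gaussianReal_map_add_const]
    congr 1
    · simp
    · ext
      simp [Real.sq_sqrt hT.le, hT.le]
  rw [h, Phi_eq_gaussianReal, map_measureReal_apply (by fun_prop) measurableSet_Iic,
    map_measureReal_apply (by fun_prop) (measurableSet_Iic.preimage (by fun_prop))]
  congr 1
  ext y
  simp only [Set.mem_preimage, Set.mem_Iic]
  rw [le_div_iff₀ hs, le_sub_iff_add_le, mul_comm]

lemma gaussianPDFReal_eq_likelihoodRatio {T : ℝ} (hT : 0 < T) (m y : ℝ) :
    gaussianPDFReal m (Real.toNNReal T) y =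
      Real.exp ((2 * m * y - m ^ 2) / (2 * T)) * gaussianPDFReal 0 (Real.toNNReal T) y := by
  simp only [gaussianPDFReal, Real.coe_toNNReal _ hT.le]
  rw [mul_left_comm, ← Real.exp_add]
  congr 2
  field_simp
  ring

lemma gaussianReal_real_eq_integral {T : ℝ} (hT : 0 < T) (m : ℝ) {A : Set ℝ}
    (hA : MeasurableSet A) : (gaussianReal m (Real.toNNReal T)).real A =
      ∫ y, A.indicator (gaussianPDFReal m (Real.toNNReal T)) y := by
  rw [measureReal_def, gaussianReal_apply_eq_integral _ (Real.toNNReal_pos.2 hT).ne',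
    ENNReal.toReal_ofReal (integral_nonneg fun y => gaussianPDFReal_nonneg _ _ y),
    integral_indicator hA]

/-- Neyman–Pearson for Gaussian shifts: among sets of no larger `N(0,T)`-mass, a half-line
`(t, ∞)` has the largest `N(m,T)`-mass. -/
lemma gaussian_neymanPearson {T m : ℝ} (hT : 0 < T) (hm : 0 < m) (t : ℝ) {A : Set ℝ}
    (hA : MeasurableSet A)
    (hle : (gaussianReal 0 (Real.toNNReal T)).real A ≤
      (gaussianReal 0 (Real.toNNReal T)).real (Set.Ioi t)) :
    (gaussianReal m (Real.toNNReal T)).real A ≤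
      (gaussianReal m (Real.toNNReal T)).real (Set.Ioi t) := by
  set k : ℝ := Real.exp ((2 * m * t - m ^ 2) / (2 * T)) with hk
  have hk0 : 0 < k := Real.exp_pos _
  rw [gaussianReal_real_eq_integral hT _ hA, gaussianReal_real_eq_integral hT _ measurableSet_Ioi]
    at hle ⊢
  set f := gaussianPDFReal 0 (Real.toNNReal T) with hf
  set g := gaussianPDFReal m (Real.toNNReal T) with hg
  have hfi : Integrable f := integrable_gaussianPDFReal _ _
  have hgi : Integrable g := integrable_gaussianPDFReal _ _
  have hfA := hfi.indicator hA
  have hgA := hgi.indicator hA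
  have hfB := hfi.indicator (measurableSet_Ioi (a := t))
  have hgB := hgi.indicator (measurableSet_Ioi (a := t))
  -- `(1_B − 1_A)(g − k f) ≥ 0` pointwise, as `g − k f` is positive exactly on `B = (t, ∞)`.
  have hpt : ∀ y, A.indicator g y + k * (Set.Ioi t).indicator f y ≤
      (Set.Ioi t).indicator g y + k * A.indicator f y := by
    intro y
    have hgy : g y = Real.exp ((2 * m * y - m ^ 2) / (2 * T)) * f y :=
      gaussianPDFReal_eq_likelihoodRatio hT m y
    have hfy : 0 ≤ f y := gaussianPDFReal_nonneg _ _ _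
    by_cases hy : t < y
    · have : k * f y ≤ g y := by
        rw [hgy, hk]
        gcongr
      by_cases hyA : y ∈ A <;> simp [hy, hyA] <;> linarith
    · have : g y ≤ k * f y := by
        rw [hgy, hk]
        have := not_lt.1 hy
        gcongr
      by_cases hyA : y ∈ A <;> simp [hy, hyA] <;> linarith
  have hI := integral_mono (hgA.add (hfB.const_mul k)) (hgB.add (hfA.const_mul k)) hpt
  simp only [Pi.add_apply] at hI
  rw [integral_add hgA (hfB.const_mul k), integral_add hgB (hfA.const_mul k),
    integral_const_mul, integral_const_mul] at hI
  linarith [mul_le_mul_of_nonneg_left hle hk0.le]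

lemma typeII_threshold {T : ℝ} (hT : 0 < T) (m q : ℝ) :
    (gaussianReal m (Real.toNNReal T)).real (Set.Ioi (Real.sqrt T * q))ᶜ =
      Phi (q - m / Real.sqrt T) := by
  have hs : 0 < Real.sqrt T := Real.sqrt_pos.2 hT
  rw [Set.compl_Ioi, gaussianReal_Iic hT]
  congr 1
  field_simp

/-- For every `m > 0` the type II errors of level-`ε` tests have a least element, attained by the
threshold test. -/
lemma isLeast_typeII {T m ε : ℝ} (hT : 0 < T) (hm : 0 < m) (hε : ε ∈ Set.Ioo (0 : ℝ) 1) :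
    IsLeast {b : ℝ | ∃ A : Set ℝ, MeasurableSet A ∧
      (gaussianReal 0 (Real.toNNReal T) A).toReal ≤ ε ∧
      b = (gaussianReal m (Real.toNNReal T) Aᶜ).toReal}
      (Phi (PhiInv (1 - ε) - m / Real.sqrt T)) := by
  have hp : 1 - ε ∈ Set.Ioo (0 : ℝ) 1 := ⟨by linarith [hε.2], by linarith [hε.1]⟩
  have hsize : (gaussianReal 0 (Real.toNNReal T)).real
      (Set.Ioi (Real.sqrt T * PhiInv (1 - ε))) = ε := by
    have h := typeII_threshold hT 0 (PhiInv (1 - ε))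
    rw [probReal_compl_eq_one_sub measurableSet_Ioi, zero_div, sub_zero, Phi_PhiInv hp] at h
    linarith
  refine ⟨⟨_, measurableSet_Ioi, hsize.le, (typeII_threshold hT m _).symm⟩, ?_⟩
  rintro b ⟨A, hA, hAε, rfl⟩
  have hnp := gaussian_neymanPearson hT hm (Real.sqrt T * PhiInv (1 - ε)) hA (hAε.trans hsize.ge)
  rw [← typeII_threshold hT m, ← measureReal_def, probReal_compl_eq_one_sub hA,
    probReal_compl_eq_one_sub measurableSet_Ioi]
  linarith

lemma minTypeII_eq {T m ε : ℝ} (hT : 0 < T) (hm : 0 < m) (hε : ε ∈ Set.Ioo (0 : ℝ) 1) :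
    minTypeII T m ε = Phi (PhiInv (1 - ε) - m / Real.sqrt T) :=
  (isLeast_typeII hT hm hε).csInf_eq

/-- Max-min reduction: `sup_{m ≥ m₀} inf_{A : N(0,T)(A) ≤ ε} N(m,T)(Aᶜ)`
equals `Φ(Φ⁻¹(1−ε) − m₀/√T)`; the supremum is attained at `m = m₀` and the inner
infimum at the threshold test `A = {y : y > √T·Φ⁻¹(1−ε)}`. -/
theorem maxmin_reduction (T m₀ ε : ℝ) (hT : 0 < T) (hm₀ : 0 < m₀)
    (hε : ε ∈ Set.Ioo (0 : ℝ) 1) :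
    sSup ((fun m => minTypeII T m ε) '' Set.Ici m₀) = Phi (PhiInv (1 - ε) - m₀ / Real.sqrt T) ∧
    minTypeII T m₀ ε = Phi (PhiInv (1 - ε) - m₀ / Real.sqrt T) ∧
    (gaussianReal m₀ (Real.toNNReal T)
        ({y : ℝ | y > Real.sqrt T * PhiInv (1 - ε)}ᶜ)).toReal = minTypeII T m₀ ε := by
  have h₀ := minTypeII_eq hT hm₀ hε
  refine ⟨IsGreatest.csSup_eq ⟨⟨m₀, Set.mem_Ici.2 le_rfl, h₀⟩, ?_⟩, h₀, ?_⟩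
  · rintro _ ⟨m, hm, rfl⟩
    have hm' : m₀ ≤ m := hm
    simp only [minTypeII_eq hT (hm₀.trans_le hm') hε]
    apply Phi_mono
    gcongr
  · rw [h₀]
    exact typeII_threshold hT m₀ _
end
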